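/- Compactness of constrained average dwell-time trajectories (SC property): let χ be a closed covering of ℝⁿ, f: ℝⁿ × Γ → ℝⁿ continuous, Γ finite, τ_D > 0, N₀ ∈ ℕ. Every uniformly bounded sequence {(x_k, σ_k)} of trajectories of ẋ = f(x,σ) with σ_k of average dwell-time τ_D and chatter bound N₀ and x_k(t) ∈ χ_{σ_k(t)} for all t ≥ 0 admits a subsequence {(x_{k_l}, σ_{k_l})} and a trajectory (x*, σ*) of the same class (σ* has average dwell-time τ_D and chatter bound N₀, and x*(t) ∈ χ_{σ*(t)} for all t) such that x_{k_l} → x* uniformly on compact subsets of ℝ₊ and σ_{k_l}(t) → σ*(t) for almost every t ≥ 0. -/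

import Mathlib

open Filter Set MeasureTheory

/-- The switching times (points of left-discontinuity) of a signal `σ` on `(0,∞)`. -/
def SwitchTimes {Γ : Type*} (σ : ℝ → Γ) : Set ℝ :=
  {s | 0 < s ∧ ∀ ε > 0, ∃ u, s - ε < u ∧ u < s ∧ σ u ≠ σ s}

/-- `σ` is locally constant from the right at every time (right-continuity and
piecewise constancy from the right). -/
def RightLocConst {Γ : Type*} (σ : ℝ → Γ) : Prop :=
  ∀ s : ℝ, ∃ ε > 0, ∀ u : ℝ, s ≤ u → u < s + ε → σ u = σ s

/-- `σ` has average dwell-time `τD` and chatter bound `N₀`: the number of switching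
times in any open interval `(τ₁,τ₂) ⊆ ℝ₊` is at most `N₀ + (τ₂ - τ₁)/τD`. -/
def HasADT {Γ : Type*} (σ : ℝ → Γ) (τD : ℝ) (N₀ : ℕ) : Prop :=
  ∀ τ₁ τ₂ : ℝ, 0 ≤ τ₁ → τ₁ < τ₂ →
    (Nat.card ↥(SwitchTimes σ ∩ Set.Ioo τ₁ τ₂) : ℝ) ≤ (N₀ : ℝ) + (τ₂ - τ₁) / τD

/-- A switching signal with average dwell-time `τD > 0` and chatter bound `N₀`:
piecewise constant, right-continuous, with the average dwell-time property. -/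
def IsSwitchingSignal {Γ : Type*} (σ : ℝ → Γ) (τD : ℝ) (N₀ : ℕ) : Prop :=
  RightLocConst σ ∧ HasADT σ τD N₀

/-- A trajectory of the switched system `ẋ = f(x,σ)`: a continuous curve satisfying the
integral equation on `[0,∞)`. -/
def IsTrajectory {n m : ℕ}
    (f : EuclideanSpace ℝ (Fin n) → Fin m → EuclideanSpace ℝ (Fin n))
    (x : ℝ → EuclideanSpace ℝ (Fin n)) (σ : ℝ → Fin m) : Prop :=
  ContinuousOn x (Set.Ici 0) ∧
  ∀ t : ℝ, 0 ≤ t → x t = x 0 + ∫ s in (0:ℝ)..t, f (x s) (σ s)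

/-!
The states are locally equi-Lipschitz, so Arzelà–Ascoli extracts their limit. For the signals, let
`N_k(t)` be the number of switches of `σ_k` up to time `t`. The dwell-time bound makes these
increasing `ℕ`-valued functions locally bounded, and `σ_k` is constant wherever `N_k` is, so a
diagonal argument over rational times as in Helly's selection theorem applies: if the limiting
count `G` takes the same value at rationals `q < r`, the counts and hence the signals are
eventually frozen on `[q, r]`, and only countably many times lie in no such interval. Near each
switch of the limit signal the `σ_k` must eventually switch, so limit switches are counted by
switches of `σ_k` and the dwell-time bound survives; dominated convergence gives the limit
equation.
-/

open scoped Topology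

theorem isClosedEmbedding_toUniformOnFunIsCompact {X E : Type*} [TopologicalSpace X]
    [CompactlyCoherentSpace X] [UniformSpace E] :
    Topology.IsClosedEmbedding (ContinuousMap.toUniformOnFunIsCompact : C(X, E) → _) where
  toIsEmbedding := ContinuousMap.isUniformEmbedding_toUniformOnFunIsCompact.isEmbedding
  isClosed_range := by
    rw [ContinuousMap.range_toUniformOnFunIsCompact]
    exact UniformOnFun.isClosed_setOfPred_continuous CompactlyCoherentSpace.isCoherentWith

theorem exists_subseq_tendsto_of_equicontinuous {X E : Type*} [TopologicalSpace X]
    [WeaklyLocallyCompactSpace X] [SigmaCompactSpace X] [MetricSpace E] {F : ℕ → C(X, E)}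
    (hF : Equicontinuous fun k => ⇑(F k)) (hcpt : ∀ t, ∃ Q, IsCompact Q ∧ ∀ k, F k t ∈ Q) :
    ∃ φ : ℕ → ℕ, StrictMono φ ∧ ∃ f, Tendsto (fun l => F (φ l)) atTop (𝓝 f) := by
  have hclosure : IsCompact (closure (range F)) := by
    refine ArzelaAscoli.isCompact_closure_of_isClosedEmbedding (fun K hK => hK)
      (F := fun f : C(X, E) => ⇑f) isClosedEmbedding_toUniformOnFunIsCompact
      (fun K _ => Equicontinuous.equicontinuousOn ?_ K) fun K _ t _ => ?_
    · refine fun t U hU => (hF t U hU).mono fun s hs => ?_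
      rintro ⟨_, k, rfl⟩
      exact hs k
    · obtain ⟨Q, hQ, hFQ⟩ := hcpt t
      exact ⟨Q, hQ, forall_mem_range.2 hFQ⟩
  obtain ⟨f, -, φ, hφ, hlim⟩ := hclosure.tendsto_subseq fun k => subset_closure (mem_range_self k)
  exact ⟨φ, hφ, f, hlim⟩

theorem exists_subseq_eventually_eq {ι α : Type*} [Countable ι] {u : ℕ → ι → α}
    (hu : ∀ i, (range fun k => u k i).Finite) :
    ∃ φ : ℕ → ℕ, StrictMono φ ∧ ∃ a : ι → α, ∀ i, ∀ᶠ l in atTop, u (φ l) i = a i := by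
  let _ : TopologicalSpace α := ⊥
  have : DiscreteTopology α := ⟨rfl⟩
  obtain ⟨a, -, φ, hφ, hlim⟩ := (isCompact_univ_pi fun i => (hu i).isCompact).tendsto_subseq
    (x := u) fun k i _ => mem_range_self k
  refine ⟨φ, hφ, a, fun i => ?_⟩
  simpa only [nhds_discrete, tendsto_pure] using! tendsto_pi_nhds.1 hlim i

theorem encard_le_of_forall_nhds {X ι : Type*} [TopologicalSpace X] [T2Space X] {L : Filter ι}
    [L.NeBot] {S : Set X} {A : ι → Set X} {n : ℕ}
    (hS : ∀ p ∈ S, ∀ V ∈ 𝓝 p, ∀ᶠ l in L, (A l ∩ V).Nonempty)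
    (hA : ∃ᶠ l in L, (A l).encard ≤ n) : S.encard ≤ n := by
  by_contra! hn
  obtain ⟨T, hTS, hT⟩ := exists_subset_encard_eq (Order.add_one_le_of_lt hn)
  have hTfin : T.Finite := finite_of_encard_eq_coe (k := n + 1) hT
  obtain ⟨U, hU, hdisj⟩ := hTfin.t2_separation
  have hmeet : ∀ᶠ l in L, ∀ p ∈ T, (A l ∩ U p).Nonempty :=
    (eventually_all_finite hTfin).2 fun p hp => hS p (hTS hp) _ ((hU p).2.mem_nhds (hU p).1)
  obtain ⟨l, hle, hl⟩ := (hA.and_eventually hmeet).exists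
  choose! w hwA hwU using hl
  have hinj : InjOn w T := fun p hp q hq hpq =>
    hdisj.elim_set hp hq (w p) (hwU p hp) (hpq ▸ hwU q hq)
  have hcard := (encard_le_encard_of_injOn hwA hinj).trans hle
  rw [hT] at hcard
  exact absurd hcard (by exact_mod_cast (Nat.lt_succ_self n).not_ge)

theorem tendsto_nat_ceil_mul_div_nhdsGE {t : ℝ} (ht : 0 ≤ t) :
    Tendsto (fun k : ℕ => (⌈t * k⌉₊ : ℝ) / k) atTop (𝓝[≥] t) := by
  refine tendsto_nhdsWithin_iff.2
    ⟨(tendsto_nat_ceil_mul_div_atTop ht).comp tendsto_natCast_atTop_atTop, ?_⟩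
  filter_upwards [eventually_gt_atTop 0] with k hk
  exact (le_div_iff₀ (Nat.cast_pos.2 hk)).2 (Nat.le_ceil (t * k))

theorem aestronglyMeasurable_of_continuousWithinAt_Ici {E : Type*} [TopologicalSpace E]
    [TopologicalSpace.PseudoMetrizableSpace E] {g : ℝ → E}
    (hg : ∀ t, 0 ≤ t → ContinuousWithinAt g (Ici t) t) (μ : Measure ℝ) :
    AEStronglyMeasurable g (μ.restrict (Ici 0)) := by
  have hstep (k : ℕ) : StronglyMeasurable fun t : ℝ => g ((⌈t * k⌉₊ : ℝ) / k) :=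
    (StronglyMeasurable.of_discrete (f := fun j : ℕ => g ((j : ℝ) / k))).comp_measurable
      (Nat.measurable_ceil.comp (measurable_id.mul_const _))
  refine aestronglyMeasurable_of_tendsto_ae atTop (fun k => (hstep k).aestronglyMeasurable) ?_
  filter_upwards [ae_restrict_mem measurableSet_Ici] with t ht
  exact (hg t ht).tendsto.comp (tendsto_nat_ceil_mul_div_nhdsGE ht)

theorem isClosed_setOf_encard_inter_Ioo_le (S : Set ℝ) (a : ℝ) (n : ℕ) :
    IsClosed {t | (S ∩ Ioo a t).encard ≤ n} := by
  refine isClosed_iff_frequently.2 fun t ht => encard_le_of_forall_nhds ?_ ht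
  rintro p ⟨hpS, hap, hpt⟩ V hV
  filter_upwards [lt_mem_nhds hpt] with u hu
  exact ⟨p, ⟨hpS, hap, hu⟩, mem_of_mem_nhds hV⟩

section Helly

variable {α : Type*} [PartialOrder α] [WellFoundedLT α] {G : ℚ → α}

theorem exists_rat_gt_forall_eq_of_monotone (hG : Monotone G) (t : ℝ) :
    ∃ r : ℚ, t < r ∧ ∀ q : ℚ, t < q → q ≤ r → G q = G r := by
  obtain ⟨r, hr, hmin⟩ :=
    exists_minimalFor_of_wellFoundedLT (fun q : ℚ => t < q) G (exists_rat_gt t)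
  exact ⟨r, hr, fun q hq hqr => (hG hqr).antisymm (hmin hq (hG hqr))⟩

theorem countable_setOf_forall_rat_ne_of_monotone [Countable α] (hG : Monotone G) :
    {t : ℝ | ∀ q r : ℚ, q < t → t < r → G q ≠ G r}.Countable := by
  choose ρ hρ hρG using exists_rat_gt_forall_eq_of_monotone hG
  refine MapsTo.countable_of_injOn (f := fun t => G (ρ t)) (mapsTo_univ _ _) ?_ countable_univ
  intro s hs t ht hst
  wlog hlt : s < t generalizing s t
  · exact (not_lt.1 hlt).eq_or_lt.elim Eq.symm fun h => (this ht hs hst.symm h).symm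
  obtain ⟨q, hsq, hqt⟩ := exists_rat_btwn (lt_min (hρ s) hlt)
  have hq : G q = G (ρ s) := hρG s q hsq (by exact_mod_cast (hqt.trans_le (min_le_left _ _)).le)
  exact absurd (hq.trans hst) (ht q (ρ t) (hqt.trans_le (min_le_right _ _)) (hρ t))

end Helly

section RightContinuousSignals

variable {Γ : Type*}

theorem rightLocConst_iff_eventually_eq {σ : ℝ → Γ} :
    RightLocConst σ ↔ ∀ s, ∀ᶠ u in 𝓝[≥] s, σ u = σ s := by
  refine forall_congr' fun s => ?_
  rw [Filter.Eventually, mem_nhdsGE_iff_exists_Ico_subset]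
  constructor
  · rintro ⟨ε, hε, h⟩
    exact ⟨s + ε, lt_add_of_pos_right s hε, fun u hu => h u hu.1 hu.2⟩
  · rintro ⟨v, hv, h⟩
    exact ⟨v - s, sub_pos.2 hv, fun u hsu hu => h ⟨hsu, by linarith⟩⟩

theorem mem_switchTimes_iff_frequently {σ : ℝ → Γ} {s : ℝ} :
    s ∈ SwitchTimes σ ↔ 0 < s ∧ ∃ᶠ u in 𝓝[<] s, σ u ≠ σ s := by
  refine and_congr_right fun _ => ?_
  rw [(nhdsLT_basis s).frequently_iff]
  constructor
  · intro h a ha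
    obtain ⟨u, hau, hus, hne⟩ := h (s - a) (sub_pos.2 ha)
    exact ⟨u, ⟨by linarith, hus⟩, hne⟩
  · intro h ε hε
    obtain ⟨u, ⟨hau, hus⟩, hne⟩ := h (s - ε) (sub_lt_self s hε)
    exact ⟨u, hau, hus, hne⟩

theorem exists_rightLocConst_ae_eventually_eq {ι α : Type*} [PartialOrder α] [WellFoundedLT α]
    [Countable α] {L : Filter ι} [L.NeBot] {σ : ι → ℝ → Γ} {N : ι → ℝ → α} {g : ℚ → Γ} {G : ℚ → α}
    (hN : ∀ i, Monotone (N i)) (hσN : ∀ i, (σ i).FactorsThrough (N i))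
    (hg : ∀ q : ℚ, ∀ᶠ i in L, σ i q = g q) (hG : ∀ q : ℚ, ∀ᶠ i in L, N i q = G q) :
    ∃ σ' : ℝ → Γ, RightLocConst σ' ∧ ∀ᵐ t, ∀ᶠ i in L, σ i t = σ' t := by
  have hGmono : Monotone G := fun q r hqr => by
    obtain ⟨l, hq, hr⟩ := ((hG q).and (hG r)).exists
    exact hq ▸ hr ▸ hN l (Rat.cast_le.2 hqr)
  have hgG : g.FactorsThrough G := fun q r hqr => by
    obtain ⟨l, ⟨hgq, hgr⟩, hGq, hGr⟩ := (((hg q).and (hg r)).and ((hG q).and (hG r))).exists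
    exact hgq ▸ hgr ▸ hσN l (by rw [hGq, hGr, hqr])
  choose ρ hρ hρG using exists_rat_gt_forall_eq_of_monotone hGmono
  have hρ_eq : ∀ t : ℝ, ∀ r : ℚ, t < r → r ≤ ρ t → g r = g (ρ t) := fun t r htr hr =>
    hgG (hρG t r htr hr)
  refine ⟨fun t => g (ρ t), rightLocConst_iff_eventually_eq.2 fun s => ?_, ?_⟩
  · filter_upwards [Ico_mem_nhdsGE (hρ s)] with u hu
    obtain ⟨q, huq, hq⟩ := exists_rat_btwn (lt_min hu.2 (hρ u))
    rw [lt_min_iff, Rat.cast_lt, Rat.cast_lt] at hq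
    rw [← hρ_eq u q huq hq.2.le, hρ_eq s q (hu.1.trans_lt huq) hq.1.le]
  · filter_upwards [(countable_setOf_forall_rat_ne_of_monotone hGmono).ae_notMem volume] with t ht
    simp only [not_forall, not_not] at ht
    obtain ⟨q, r, hqt, htr, hqr⟩ := ht
    obtain ⟨p, htp, hp⟩ := exists_rat_btwn (lt_min htr (hρ t))
    rw [lt_min_iff, Rat.cast_lt, Rat.cast_lt] at hp
    have hpr : G p = G r := (hGmono hp.1.le).antisymm
      (hqr ▸ hGmono (Rat.cast_lt.1 (hqt.trans htp)).le)
    filter_upwards [hG q, hG r, hg r] with l hlq hlr hgr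
    have hNt : N l t = N l r :=
      (hN l htr.le).antisymm (hlr.trans (hqr.symm.trans hlq.symm) ▸ hN l hqt.le)
    rw [hσN l hNt, hgr, ← hgG hpr, hρ_eq t p htp hp.2.le]

theorem exists_subseq_ae_eventually_eq_of_monotone [Finite Γ] {σ : ℕ → ℝ → Γ} {N : ℕ → ℝ → ℕ}
    (hN : ∀ k, Monotone (N k)) (hNbdd : ∀ t, BddAbove (range fun k => N k t))
    (hσN : ∀ k, (σ k).FactorsThrough (N k)) :
    ∃ φ : ℕ → ℕ, StrictMono φ ∧ ∃ σ' : ℝ → Γ, RightLocConst σ' ∧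
      ∀ᵐ t, ∀ᶠ l in atTop, σ (φ l) t = σ' t := by
  obtain ⟨φ, hφ, a, ha⟩ := exists_subseq_eventually_eq
    (u := fun k (q : ℚ) => (σ k q, N k q)) fun q =>
      (finite_univ.prod (hNbdd q).finite).subset (range_subset_iff.2 fun k =>
        ⟨mem_univ _, mem_range_self k⟩)
  exact ⟨φ, hφ, exists_rightLocConst_ae_eventually_eq (fun l => hN (φ l)) (fun l => hσN (φ l))
    (fun q => (ha q).mono fun l hl => congrArg Prod.fst hl)
    (fun q => (ha q).mono fun l hl => congrArg Prod.snd hl)⟩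

end RightContinuousSignals

section Switching

variable {Γ : Type*} {σ : ℝ → Γ} {τD : ℝ} {N₀ : ℕ}

theorem RightLocConst.eventually_notMem_switchTimes (hσ : RightLocConst σ) (s : ℝ) :
    ∀ᶠ u in 𝓝[>] s, u ∉ SwitchTimes σ := by
  have hs : ∀ᶠ u in 𝓝[>] s, σ u = σ s :=
    (rightLocConst_iff_eventually_eq.1 hσ s).filter_mono (nhdsWithin_mono s Ioi_subset_Ici_self)
  filter_upwards [eventually_eventually_nhdsWithin.2 hs, hs, self_mem_nhdsWithin]
    with u hnear hu hsu hmem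
  rw [isOpen_Ioi.nhdsWithin_eq hsu] at hnear
  exact (mem_switchTimes_iff_frequently.1 hmem).2
    ((hnear.filter_mono nhdsWithin_le_nhds).mono fun v hv => not_not.2 (hv.trans hu.symm))

theorem RightLocConst.eq_of_disjoint_switchTimes (hσ : RightLocConst σ) {a b : ℝ} (ha : 0 ≤ a)
    (hab : a ≤ b) (hdisj : Disjoint (SwitchTimes σ) (Ioc a b)) : σ a = σ b := by
  refine isPreconnected_Icc.induction₂ (fun u v => σ u = σ v) (fun u hu => ?_)
    (fun _ _ _ _ _ _ => Eq.trans) (fun _ _ _ _ => Eq.symm)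
    (left_mem_Icc.2 hab) (right_mem_Icc.2 hab)
  suffices h : ∀ᶠ v in 𝓝[Icc a b] u, σ v = σ u from h.mono fun _ => Eq.symm
  have hright : ∀ᶠ v in 𝓝[≥] u, σ v = σ u := rightLocConst_iff_eventually_eq.1 hσ u
  rcases hu.1.eq_or_lt with rfl | hau
  · exact hright.filter_mono (nhdsWithin_mono a Icc_subset_Ici_self)
  · have hleft : ∀ᶠ v in 𝓝[<] u, σ v = σ u := by
      have hnot := disjoint_right.1 hdisj ⟨hau, hu.2⟩
      rw [mem_switchTimes_iff_frequently, not_and, not_frequently] at hnot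
      exact (hnot (ha.trans_lt hau)).mono fun _ => not_not.1
    refine Eventually.filter_mono nhdsWithin_le_nhds ?_
    rw [← nhdsLT_sup_nhdsGE]
    exact eventually_sup.2 ⟨hleft, hright⟩

-- `HasADT` counts with `Nat.card`, which is `0` on infinite sets.
theorem HasADT.encard_inter_Ioo_le_of_finite (h : HasADT σ τD N₀) {a b : ℝ} (ha : 0 ≤ a)
    (hab : a < b) (hfin : (SwitchTimes σ ∩ Ioo a b).Finite) :
    (SwitchTimes σ ∩ Ioo a b).encard ≤ ⌊N₀ + (b - a) / τD⌋₊ := by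
  rw [← hfin.cast_ncard_eq]
  exact_mod_cast Nat.le_floor (h a b ha hab)

theorem RightLocConst.hasADT_iff_encard_le (hσ : RightLocConst σ) (hτ : 0 < τD) :
    HasADT σ τD N₀ ↔ ∀ a b, 0 ≤ a → a < b →
      (SwitchTimes σ ∩ Ioo a b).encard ≤ ⌊N₀ + (b - a) / τD⌋₊ := by
  constructor
  · intro h a b ha hab
    -- Real induction on the right endpoint `t` of `(a, t)`: just after `t` the only possible new
    -- switching time is `t` itself, so the set of switching times stays finite and `h` applies.
    refine (isClosed_setOf_encard_inter_Ioo_le (SwitchTimes σ) a _).inter isClosed_Icc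
      |>.Icc_subset_of_forall_mem_nhdsWithin (by simp) ?_ (right_mem_Icc.2 hab.le)
    rintro t ⟨ht, hat, htb⟩
    obtain ⟨c, htc, hc⟩ :=
      mem_nhdsGT_iff_exists_Ioo_subset.1 (hσ.eventually_notMem_switchTimes t)
    filter_upwards [Ioo_mem_nhdsGT (lt_min htc htb)] with u hu
    have hsub : SwitchTimes σ ∩ Ioo a u ⊆ insert t (SwitchTimes σ ∩ Ioo a t) := by
      rintro v ⟨hv, hav, hvu⟩
      rcases lt_trichotomy v t with hvt | rfl | htv
      · exact Or.inr ⟨hv, hav, hvt⟩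
      · exact Or.inl rfl
      · exact absurd hv (hc ⟨htv, hvu.trans (hu.2.trans_le (min_le_left _ _))⟩)
    have hfin : (SwitchTimes σ ∩ Ioo a u).Finite :=
      ((finite_of_encard_le_coe ht).insert t).subset hsub
    have hub : u ≤ b := (hu.2.trans_le (min_le_right _ _)).le
    refine (h.encard_inter_Ioo_le_of_finite ha (hat.trans_lt hu.1) hfin).trans ?_
    gcongr
  · intro h a b ha hab
    have hfin : (SwitchTimes σ ∩ Ioo a b).Finite := finite_of_encard_le_coe (h a b ha hab)
    have hle := h a b ha hab
    rw [← hfin.cast_ncard_eq, Nat.cast_le, Nat.le_floor_iff (by have := sub_pos.2 hab; positivity)]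
      at hle
    exact hle

/-- The number of switching times of `σ` up to time `t`: an increasing, integer-valued clock
through which the signal factors. -/
noncomputable def switchCount (σ : ℝ → Γ) (t : ℝ) : ℕ :=
  (SwitchTimes σ ∩ Ioc 0 t).ncard

namespace IsSwitchingSignal

theorem encard_inter_Ioc_le (hσ : IsSwitchingSignal σ τD N₀) (hτ : 0 < τD) (t : ℝ) :
    (SwitchTimes σ ∩ Ioc 0 t).encard ≤ ⌊N₀ + (|t| + 1) / τD⌋₊ := by
  have hsub : Ioc 0 t ⊆ Ioo 0 (|t| + 1) := fun u hu =>
    ⟨hu.1, (hu.2.trans (le_abs_self t)).trans_lt (lt_add_one _)⟩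
  have hle := (hσ.1.hasADT_iff_encard_le hτ).1 hσ.2 0 (|t| + 1) le_rfl (by positivity)
  rw [sub_zero] at hle
  exact (encard_le_encard (inter_subset_inter_right _ hsub)).trans hle

theorem finite_inter_Ioc (hσ : IsSwitchingSignal σ τD N₀) (hτ : 0 < τD) (t : ℝ) :
    (SwitchTimes σ ∩ Ioc 0 t).Finite :=
  finite_of_encard_le_coe (hσ.encard_inter_Ioc_le hτ t)

theorem switchCount_le (hσ : IsSwitchingSignal σ τD N₀) (hτ : 0 < τD) (t : ℝ) :
    switchCount σ t ≤ ⌊N₀ + (|t| + 1) / τD⌋₊ :=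
  ENat.toNat_le_of_le_natCast (hσ.encard_inter_Ioc_le hτ t)

theorem monotone_switchCount (hσ : IsSwitchingSignal σ τD N₀) (hτ : 0 < τD) :
    Monotone (switchCount σ) := fun _ t hst =>
  ncard_le_ncard (inter_subset_inter_right _ (Ioc_subset_Ioc_right hst))
    (hσ.finite_inter_Ioc hτ t)

theorem factorsThrough_switchCount (hσ : IsSwitchingSignal σ τD N₀) (hτ : 0 < τD) :
    (fun t => σ (max t 0)).FactorsThrough (switchCount σ) := by
  intro a b hcount
  wlog hab : a ≤ b generalizing a b
  · exact (this hcount.symm (le_of_not_ge hab)).symm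
  have heq : SwitchTimes σ ∩ Ioc 0 a = SwitchTimes σ ∩ Ioc 0 b :=
    eq_of_subset_of_ncard_le (inter_subset_inter_right _ (Ioc_subset_Ioc_right hab)) hcount.ge
      (hσ.finite_inter_Ioc hτ b)
  refine hσ.1.eq_of_disjoint_switchTimes (le_max_right a 0) (max_le_max_right 0 hab)
    (disjoint_left.2 fun u hu hab' => ?_)
  have hu0 : 0 < u := (le_max_right a 0).trans_lt hab'.1
  have hub : u ≤ b := (le_max_iff.1 hab'.2).resolve_right hu0.not_ge
  have hua : u ≤ a := (heq.ge ⟨hu, hu0, hub⟩).2.2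
  exact ((le_max_left a 0).trans_lt hab'.1).not_ge hua

end IsSwitchingSignal

section Limits

variable {ι : Type*} {L : Filter ι} {σs : ι → ℝ → Γ}

theorem RightLocConst.frequently_nhdsGT_of_ae (hσ : RightLocConst σ) {p : ℝ → Prop}
    (hp : ∀ᵐ t ∂volume.restrict (Ici 0), p t) {t : ℝ} (ht : 0 ≤ t) :
    ∃ᶠ s in 𝓝[>] t, p s ∧ σ s = σ t := by
  have hdense : Dense {s : ℝ | 0 ≤ s → p s} :=
    Measure.dense_of_ae ((ae_restrict_iff' measurableSet_Ici).1 hp)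
  have hσt : ∀ᶠ s in 𝓝[>] t, σ s = σ t :=
    (rightLocConst_iff_eventually_eq.1 hσ t).filter_mono (nhdsWithin_mono t Ioi_subset_Ici_self)
  refine Frequently.and_eventually ?_ hσt
  refine (nhdsGT_basis t).frequently_iff.2 fun b htb => ?_
  obtain ⟨s, hs, hps⟩ := hdense.exists_mem_open isOpen_Ioo (nonempty_Ioo.2 htb)
  exact ⟨s, hps, hs (ht.trans hps.1.le)⟩

theorem RightLocConst.eventually_nonempty_switchTimes_inter (hσ : RightLocConst σ)
    (hσs : ∀ i, RightLocConst (σs i))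
    (hlim : ∀ᵐ t ∂volume.restrict (Ici 0), ∀ᶠ i in L, σs i t = σ t)
    {p : ℝ} (hp : p ∈ SwitchTimes σ) {V : Set ℝ} (hV : V ∈ 𝓝 p) :
    ∀ᶠ i in L, (SwitchTimes (σs i) ∩ V).Nonempty := by
  obtain ⟨c, d, ⟨hcp, hpd⟩, hcd⟩ := mem_nhds_iff_exists_Ioo_subset.1 hV
  obtain ⟨hp0, hswitch⟩ := mem_switchTimes_iff_frequently.1 hp
  obtain ⟨u, hne, hcu, hup⟩ :=
    (hswitch.and_eventually (Ioo_mem_nhdsLT (max_lt hcp hp0))).exists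
  obtain ⟨s, ⟨hs, hsu⟩, hus, hsp⟩ := ((hσ.frequently_nhdsGT_of_ae hlim
    ((le_max_right c 0).trans hcu.le)).and_eventually (Ioo_mem_nhdsGT hup)).exists
  obtain ⟨r, ⟨hr, hrp⟩, hpr, hrd⟩ :=
    ((hσ.frequently_nhdsGT_of_ae hlim hp0.le).and_eventually (Ioo_mem_nhdsGT hpd)).exists
  have hs0 : 0 ≤ s := (le_max_right c 0).trans (hcu.trans hus).le
  filter_upwards [hs, hr] with i his hir
  by_contra hempty
  have hdisj : Disjoint (SwitchTimes (σs i)) (Ioc s r) := by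
    refine (disjoint_iff_inter_eq_empty.2 (not_nonempty_iff_eq_empty.1 hempty)).mono_right ?_
    exact fun v hv => hcd ⟨(le_max_left c 0).trans_lt (hcu.trans (hus.trans hv.1)),
      hv.2.trans_lt hrd⟩
  have hconst := (hσs i).eq_of_disjoint_switchTimes hs0 (hsp.trans hpr).le hdisj
  rw [his, hir, hsu, hrp] at hconst
  exact hne hconst

theorem RightLocConst.hasADT_of_ae_eventually_eq [L.NeBot] (hσ : RightLocConst σ)
    (hσs : ∀ i, IsSwitchingSignal (σs i) τD N₀) (hτ : 0 < τD)
    (hlim : ∀ᵐ t ∂volume.restrict (Ici 0), ∀ᶠ i in L, σs i t = σ t) : HasADT σ τD N₀ := by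
  refine (hσ.hasADT_iff_encard_le hτ).2 fun a b ha hab => ?_
  refine encard_le_of_forall_nhds (L := L) (A := fun i => SwitchTimes (σs i) ∩ Ioo a b) ?_
    (Frequently.of_forall fun i => ((hσs i).1.hasADT_iff_encard_le hτ).1 (hσs i).2 a b ha hab)
  rintro p ⟨hp, hpab⟩ V hV
  filter_upwards [hσ.eventually_nonempty_switchTimes_inter (fun i => (hσs i).1) hlim hp
    (inter_mem (isOpen_Ioo.mem_nhds hpab) hV)] with i hi
  rwa [inter_assoc]

theorem exists_subseq_ae_eventually_eq_of_isSwitchingSignal [Finite Γ] {σs : ℕ → ℝ → Γ}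
    (hσs : ∀ k, IsSwitchingSignal (σs k) τD N₀) (hτ : 0 < τD) :
    ∃ φ : ℕ → ℕ, StrictMono φ ∧ ∃ σ : ℝ → Γ, IsSwitchingSignal σ τD N₀ ∧
      ∀ᵐ t ∂volume.restrict (Ici 0), ∀ᶠ l in atTop, σs (φ l) t = σ t := by
  obtain ⟨φ, hφ, σ, hσ, hlim⟩ := exists_subseq_ae_eventually_eq_of_monotone
    (σ := fun k t => σs k (max t 0)) (fun k => (hσs k).monotone_switchCount hτ)
    (fun t => ⟨_, forall_mem_range.2 fun k => (hσs k).switchCount_le hτ t⟩)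
    (fun k => (hσs k).factorsThrough_switchCount hτ)
  have hlim_Ici : ∀ᵐ t ∂volume.restrict (Ici 0), ∀ᶠ l in atTop, σs (φ l) t = σ t := by
    filter_upwards [ae_restrict_of_ae hlim, ae_restrict_mem measurableSet_Ici] with t ht ht0
    simpa only [max_eq_left (mem_Ici.1 ht0)] using ht
  exact ⟨φ, hφ, σ, ⟨hσ, hσ.hasADT_of_ae_eventually_eq (fun l => hσs (φ l)) hτ hlim_Ici⟩, hlim_Ici⟩

end Limits

end Switching

theorem equicontinuous_comp_max_zero {ι E : Type*} [PseudoMetricSpace E] {u : ι → ℝ → E}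
    (hu : ∀ T, ∃ C, ∀ i, LipschitzOnWith C (u i) (Icc 0 T)) :
    Equicontinuous fun i t => u i (max t 0) := by
  intro t₀
  obtain ⟨C, hC⟩ := hu (|t₀| + 1)
  refine Metric.equicontinuousAt_of_continuity_modulus (fun t => C * |max t₀ 0 - max t 0|) ?_ _ ?_
  · exact Continuous.tendsto' (by fun_prop) _ _ (by simp)
  · have hmem {t : ℝ} (ht : t < |t₀| + 1) : max t 0 ∈ Icc 0 (|t₀| + 1) :=
      ⟨le_max_right t 0, max_le ht.le (by positivity)⟩
    have ht₀ : t₀ < |t₀| + 1 := (le_abs_self t₀).trans_lt (lt_add_one _)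
    filter_upwards [gt_mem_nhds ht₀] with t ht i
    exact (hC i).dist_le_mul _ (hmem ht₀) _ (hmem ht)

/-- A family of curves on `[0, ∞)` bounded on every `[0, T]`, uniformly over the family. -/
def EquiboundedOnCompacts {ι E : Type*} [Norm E] (u : ι → ℝ → E) : Prop :=
  ∀ T, ∃ M, ∀ i, ∀ t ∈ Icc 0 T, ‖u i t‖ ≤ M

theorem exists_subseq_tendstoUniformlyOn_of_lipschitzOnWith {E : Type*} [NormedAddCommGroup E]
    [ProperSpace E] {u : ℕ → ℝ → E} (hbdd : EquiboundedOnCompacts u)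
    (hlip : ∀ T, ∃ C, ∀ k, LipschitzOnWith C (u k) (Icc 0 T)) :
    ∃ φ : ℕ → ℕ, StrictMono φ ∧ ∃ v : ℝ → E, ContinuousOn v (Ici 0) ∧
      ∀ K ⊆ Ici 0, IsCompact K → TendstoUniformlyOn (fun l => u (φ l)) v atTop K := by
  have hequi := equicontinuous_comp_max_zero hlip
  obtain ⟨φ, hφ, v, hv⟩ := exists_subseq_tendsto_of_equicontinuous
    (F := fun k => ⟨fun t => u k (max t 0), hequi.continuous k⟩) hequi fun t => by
      obtain ⟨M, hM⟩ := hbdd (max t 0)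
      exact ⟨Metric.closedBall 0 M, isCompact_closedBall 0 M, fun k =>
        mem_closedBall_zero_iff.2 (hM k _ ⟨le_max_right t 0, le_rfl⟩)⟩
  refine ⟨φ, hφ, v, v.continuous.continuousOn, fun K hK hKcpt => ?_⟩
  refine (ContinuousMap.tendsto_iff_forall_isCompact_tendstoUniformlyOn.1 hv K hKcpt).congr ?_
  exact Eventually.of_forall fun l t ht => congrArg (u (φ l)) (max_eq_left (hK ht))

/-- `x` solves `ẋ = f(x, σ)` on `[0, ∞)`, in integral form; `IsTrajectory` for an arbitrary
normed state space and set of modes. -/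
def IsSwitchedSolution {E Γ : Type*} [NormedAddCommGroup E] [NormedSpace ℝ E] (f : E → Γ → E)
    (x : ℝ → E) (σ : ℝ → Γ) : Prop :=
  ContinuousOn x (Ici 0) ∧ ∀ t, 0 ≤ t → x t = x 0 + ∫ s in (0 : ℝ)..t, f (x s) (σ s)

section Solutions

variable {E Γ : Type*} [NormedAddCommGroup E] {f : E → Γ → E}

theorem RightLocConst.aestronglyMeasurable_velocity (hf : ∀ γ, Continuous fun ξ => f ξ γ)
    {x : ℝ → E} (hx : ContinuousOn x (Ici 0)) {σ : ℝ → Γ} (hσ : RightLocConst σ) (μ : Measure ℝ) :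
    AEStronglyMeasurable (fun s => f (x s) (σ s)) (μ.restrict (Ici 0)) := by
  refine aestronglyMeasurable_of_continuousWithinAt_Ici (fun t ht => ?_) μ
  have hfrozen : ContinuousWithinAt (fun s => f (x s) (σ t)) (Ici t) t :=
    (hf (σ t)).continuousAt.comp_continuousWithinAt ((hx t ht).mono (Ici_subset_Ici.2 ht))
  refine hfrozen.congr_of_eventuallyEq ?_ rfl
  exact (rightLocConst_iff_eventually_eq.1 hσ t).mono fun s hs => congrArg (f (x s)) hs

theorem EquiboundedOnCompacts.velocity [ProperSpace E] [Finite Γ]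
    (hf : ∀ γ, Continuous fun ξ => f ξ γ) {ι : Type*} {x : ι → ℝ → E}
    (hx : EquiboundedOnCompacts x) (σ : ι → ℝ → Γ) :
    EquiboundedOnCompacts fun i s => f (x i s) (σ i s) := by
  intro T
  obtain ⟨M, hM⟩ := hx T
  choose C hC using fun γ =>
    (isCompact_closedBall (0 : E) M).exists_bound_of_continuousOn (hf γ).continuousOn
  obtain ⟨B, hB⟩ := (finite_range C).bddAbove
  exact ⟨B, fun i t ht => (hC (σ i t) _ (mem_closedBall_zero_iff.2 (hM i t ht))).trans
    (hB (mem_range_self _))⟩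

theorem mem_of_ae_eventually_eq {X ι : Type*} [TopologicalSpace X] {χ : Γ → Set X}
    (hχ : ∀ γ, IsClosed (χ γ)) {L : Filter ι} [L.NeBot] {x : ι → ℝ → X} {σ : ι → ℝ → Γ}
    (hmem : ∀ i t, 0 ≤ t → x i t ∈ χ (σ i t)) {x' : ℝ → X} (hx' : ContinuousOn x' (Ici 0))
    (hlim : ∀ t, 0 ≤ t → Tendsto (fun i => x i t) L (𝓝 (x' t)))
    {σ' : ℝ → Γ} (hσ' : RightLocConst σ')
    (hlimσ : ∀ᵐ t ∂volume.restrict (Ici 0), ∀ᶠ i in L, σ i t = σ' t) {t : ℝ} (ht : 0 ≤ t) :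
    x' t ∈ χ (σ' t) := by
  have hfreq : ∃ᶠ s in 𝓝[>] t, x' s ∈ χ (σ' t) := by
    refine ((hσ'.frequently_nhdsGT_of_ae hlimσ ht).and_eventually self_mem_nhdsWithin).mono ?_
    rintro s ⟨⟨hs, hst⟩, hts⟩
    have hs0 : 0 ≤ s := ht.trans (mem_Ioi.1 hts).le
    refine (hχ (σ' t)).mem_of_tendsto (hlim s hs0) (hs.mono fun i hi => ?_)
    rw [← hst, ← hi]
    exact hmem i s hs0
  exact (hχ (σ' t)).mem_of_frequently_of_tendsto hfreq
    ((hx' t ht).mono fun s hs => ht.trans (mem_Ioi.1 hs).le)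

namespace IsSwitchedSolution

variable [NormedSpace ℝ E]

theorem lipschitzOnWith (hf : ∀ γ, Continuous fun ξ => f ξ γ) {x : ℝ → E} {σ : ℝ → Γ}
    (hx : IsSwitchedSolution f x σ) (hσ : RightLocConst σ) {T B : ℝ}
    (hB : ∀ s ∈ Icc 0 T, ‖f (x s) (σ s)‖ ≤ B) : LipschitzOnWith B.toNNReal x (Icc 0 T) := by
  have hint {t : ℝ} (ht : t ∈ Icc 0 T) :
      IntervalIntegrable (fun s => f (x s) (σ s)) volume 0 t := by
    refine (intervalIntegrable_iff_integrableOn_Icc_of_le ht.1).2 <|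
      .of_bound measure_Icc_lt_top
        ((hσ.aestronglyMeasurable_velocity hf hx.1 volume).mono_set Icc_subset_Ici_self) B ?_
    filter_upwards [ae_restrict_mem measurableSet_Icc] with s hs
    exact hB s ⟨hs.1, hs.2.trans ht.2⟩
  refine LipschitzOnWith.of_dist_le_mul fun t ht s hs => ?_
  have hsub : x t - x s = ∫ r in s..t, f (x r) (σ r) := by
    rw [hx.2 t ht.1, hx.2 s hs.1, add_sub_add_left_eq_sub,
      intervalIntegral.integral_interval_sub_left (hint ht) (hint hs)]
  rw [dist_eq_norm, hsub, Real.dist_eq]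
  refine intervalIntegral.norm_integral_le_of_norm_le_const fun r hr => ?_
  have hr : r ∈ Icc 0 T := ordConnected_Icc.uIcc_subset hs ht (uIoc_subset_uIcc hr)
  exact (hB r hr).trans (Real.le_coe_toNNReal B)

theorem of_tendsto (hf : ∀ γ, Continuous fun ξ => f ξ γ) {ι : Type*} {L : Filter ι} [L.NeBot]
    [L.IsCountablyGenerated] {x : ι → ℝ → E} {σ : ι → ℝ → Γ}
    (hsol : ∀ i, IsSwitchedSolution f (x i) (σ i)) (hσ : ∀ i, RightLocConst (σ i))
    (hbdd : EquiboundedOnCompacts fun i s => f (x i s) (σ i s))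
    {x' : ℝ → E} (hx' : ContinuousOn x' (Ici 0))
    (hlim : ∀ t, 0 ≤ t → Tendsto (fun i => x i t) L (𝓝 (x' t))) {σ' : ℝ → Γ}
    (hlimσ : ∀ᵐ t ∂volume.restrict (Ici 0), ∀ᶠ i in L, σ i t = σ' t) :
    IsSwitchedSolution f x' σ' := by
  refine ⟨hx', fun t ht => ?_⟩
  obtain ⟨B, hB⟩ := hbdd t
  have hsub : uIoc 0 t ⊆ Icc 0 t := uIoc_of_le ht ▸ Ioc_subset_Icc_self
  have hvel : ∀ s, 0 ≤ s → (∀ᶠ i in L, σ i s = σ' s) →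
      Tendsto (fun i => f (x i s) (σ i s)) L (𝓝 (f (x' s) (σ' s))) := fun s hs hσs =>
    (((hf (σ' s)).tendsto _).comp (hlim s hs)).congr' <|
      hσs.mono fun i hi => congrArg (f (x i s)) hi.symm
  have hintegral : Tendsto (fun i => ∫ s in (0 : ℝ)..t, f (x i s) (σ i s)) L
      (𝓝 (∫ s in (0 : ℝ)..t, f (x' s) (σ' s))) := by
    refine intervalIntegral.tendsto_integral_filter_of_dominated_convergence (fun _ => B)
      (Eventually.of_forall fun i =>
        ((hσ i).aestronglyMeasurable_velocity hf (hsol i).1 volume).mono_set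
          (hsub.trans Icc_subset_Ici_self))
      (Eventually.of_forall fun i => Eventually.of_forall fun s hs => hB i s (hsub hs))
      intervalIntegrable_const ?_
    filter_upwards [(ae_restrict_iff' measurableSet_Ici).1 hlimσ] with s hs hst
    exact hvel s (hsub hst).1 (hs (hsub hst).1)
  refine tendsto_nhds_unique (hlim t ht) (((hlim 0 le_rfl).add hintegral).congr fun i => ?_)
  exact ((hsol i).2 t ht).symm

end IsSwitchedSolution

end Solutions

theorem stmt8_general {E Γ : Type*} [NormedAddCommGroup E] [NormedSpace ℝ E] [ProperSpace E]
    [Finite Γ] {χ : Γ → Set E} (hχ : ∀ γ, IsClosed (χ γ)) {f : E → Γ → E}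
    (hf : ∀ γ, Continuous fun ξ => f ξ γ) {τD : ℝ} (hτ : 0 < τD) {N₀ : ℕ} {x : ℕ → ℝ → E}
    {σ : ℕ → ℝ → Γ} (hsol : ∀ k, IsSwitchedSolution f (x k) (σ k))
    (hsig : ∀ k, IsSwitchingSignal (σ k) τD N₀) (hmem : ∀ k t, 0 ≤ t → x k t ∈ χ (σ k t))
    (hbdd : EquiboundedOnCompacts x) :
    ∃ φ : ℕ → ℕ, StrictMono φ ∧ ∃ x' : ℝ → E, ∃ σ' : ℝ → Γ,
      IsSwitchedSolution f x' σ' ∧ IsSwitchingSignal σ' τD N₀ ∧ (∀ t, 0 ≤ t → x' t ∈ χ (σ' t)) ∧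
      (∀ K ⊆ Ici 0, IsCompact K → TendstoUniformlyOn (fun l => x (φ l)) x' atTop K) ∧
      ∀ᵐ t ∂volume.restrict (Ici 0), ∀ᶠ l in atTop, σ (φ l) t = σ' t := by
  have hvel := hbdd.velocity hf σ
  have hlip : ∀ T, ∃ C, ∀ k, LipschitzOnWith C (x k) (Icc 0 T) := fun T =>
    (hvel T).imp' Real.toNNReal fun B hB k => (hsol k).lipschitzOnWith hf (hsig k).1 (hB k)
  obtain ⟨φ, hφ, x', hx', hunif⟩ := exists_subseq_tendstoUniformlyOn_of_lipschitzOnWith hbdd hlip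
  obtain ⟨ψ, hψ, σ', hσ', hae⟩ :=
    exists_subseq_ae_eventually_eq_of_isSwitchingSignal (fun l => hsig (φ l)) hτ
  have hunifψ : ∀ K ⊆ Ici 0, IsCompact K →
      TendstoUniformlyOn (fun l => x (φ (ψ l))) x' atTop K := fun K hK hKcpt V hV =>
    hψ.tendsto_atTop.eventually (hunif K hK hKcpt V hV)
  have hlim : ∀ t, 0 ≤ t → Tendsto (fun l => x (φ (ψ l)) t) atTop (𝓝 (x' t)) := fun t ht =>
    (hunifψ {t} (singleton_subset_iff.2 ht) isCompact_singleton).tendsto_at (mem_singleton t)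
  refine ⟨φ ∘ ψ, hφ.comp hψ, x', σ', ?_, hσ', fun t ht => ?_, hunifψ, hae⟩
  · exact .of_tendsto hf (fun l => hsol (φ (ψ l))) (fun l => (hsig (φ (ψ l))).1)
      (fun T => (hvel T).imp fun B hB l => hB (φ (ψ l))) hx' hlim hae
  · exact mem_of_ae_eventually_eq hχ (fun l => hmem (φ (ψ l))) hx' hlim hσ'.1 hae ht

/-- SC property: with `χ` a closed covering of `ℝⁿ` and `f` continuous,
every uniformly bounded sequence of trajectories with average dwell-time `τD`, chatter
bound `N₀` and state constraint `x k (t) ∈ χ (σ k t)` admits a subsequence and a limit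
trajectory of the same class such that the states converge uniformly on compact subsets
of `ℝ₊` and the signals converge almost everywhere (eventual equality). -/
theorem stmt8 {n m : ℕ}
    (χ : Fin m → Set (EuclideanSpace ℝ (Fin n)))
    (hχcl : ∀ γ, IsClosed (χ γ)) (hχcov : (⋃ γ, χ γ) = Set.univ)
    (f : EuclideanSpace ℝ (Fin n) → Fin m → EuclideanSpace ℝ (Fin n))
    (hf : ∀ γ : Fin m, Continuous (fun ξ => f ξ γ))
    (τD : ℝ) (hτ : 0 < τD) (N₀ : ℕ)
    (x : ℕ → ℝ → EuclideanSpace ℝ (Fin n)) (σ : ℕ → ℝ → Fin m)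
    (htraj : ∀ k, IsTrajectory f (x k) (σ k))
    (hsig : ∀ k, IsSwitchingSignal (σ k) τD N₀)
    (hconstr : ∀ k, ∀ t : ℝ, 0 ≤ t → x k t ∈ χ (σ k t))
    (M : ℝ) (hM : ∀ k, ∀ t : ℝ, 0 ≤ t → ‖x k t‖ ≤ M) :
    ∃ φ : ℕ → ℕ, StrictMono φ ∧
      ∃ x' : ℝ → EuclideanSpace ℝ (Fin n), ∃ σ' : ℝ → Fin m,
        IsTrajectory f x' σ' ∧ IsSwitchingSignal σ' τD N₀ ∧
        (∀ t : ℝ, 0 ≤ t → x' t ∈ χ (σ' t)) ∧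
        (∀ K : Set ℝ, K ⊆ Set.Ici 0 → IsCompact K →
          TendstoUniformlyOn (fun l => x (φ l)) x' atTop K) ∧
        ∀ᵐ t ∂(volume.restrict (Set.Ici (0:ℝ))), ∀ᶠ l in atTop, σ (φ l) t = σ' t := by
  exact stmt8_general hχcl hf hτ htraj hsig hconstr fun _ => ⟨M, fun k t ht => hM k t ht.1⟩
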